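/- Let 0 ≤ k ≤ 2 (with the convention that ‖f‖_{1+1/k} denotes the L^∞ norm when k = 0). There exists a constant C > 0, depending only on k, such that for every measurable function f : ℝ³ × ℝ³ → [0,∞), (1/2) ∬_{ℝ³×ℝ³} ρ_f(x) ρ_f(y) |x−y|^{−1} dx dy ≤ C · ‖f‖_{L^1(ℝ⁶)}^{(2−k)/3} · ‖f‖_{L^{1+1/k}(ℝ⁶)}^{(k+1)/3} · E_kin^{rel}(f), where E_kin^{rel}(f) = ∬ √(1+|p|²) f(x,p) dp dx is the relativistic kinetic energy. -/

import Mathlib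

/-!
The estimate is the combination of three inequalities, where `ρ = ρ_f` and all integrals are
lower Lebesgue integrals of `[0,∞]`-valued functions.

* Diagonal Hardy–Littlewood–Sobolev (`lintegral_newton_le`):
  `∬ ρ(x) ρ(y) |x-y|⁻¹ ≤ C (∫ ρ^{6/5})^{5/3}`. By symmetry one may integrate only over
  `ρ(y) ≤ ρ(x)`. For fixed `x`, the region `|x-y| < R` then contributes at most `C ρ(x) R²`, and
  the region `|x-y| ≥ R` at most `C ‖ρ‖_{6/5} R^{-1/2}`, because `|z|⁻¹ ∈ L⁶(|z| ≥ R)`. The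
  optimal `R` gives `C ‖ρ‖_{6/5}^{4/5} ρ(x)^{1/5}`, and integrating against `ρ(x)` closes the
  estimate.
* Density bound (`lintegral_density_rpow_le`):
  `(∫ ρ^{6/5})^{5/3} ≤ C ‖f‖_{3/2} E_kin`. Splitting the momentum integral at `|p| = P` and
  optimizing gives `ρ ≤ C (∫ f^{3/2} dp)^{1/3} (∫ √(1+|p|²) f dp)^{1/2}` pointwise in `x`
  (`lintegral_momentum_le`); Hölder's inequality in `x` does the rest.
* Interpolation (`interpolation`):
  `‖f‖_{3/2} ≤ ‖f‖_1^{(2-k)/3} ‖f‖_{1+1/k}^{(k+1)/3}`, which is where `k ≤ 2` enters.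
-/

open MeasureTheory Set Filter Topology
open scoped ENNReal RealInnerProductSpace

noncomputable section

/-- Position/momentum space `ℝ³`. -/
abbrev V3 : Type := EuclideanSpace ℝ (Fin 3)

/-- The spatial density `ρ_f(x) = ∫ f(x,p) dp` induced by a phase-space density. -/
def spatialDensity (f : V3 × V3 → ℝ) (x : V3) : ℝ := ∫ p : V3, f (x, p)

/-- The exponent `1 + 1/k`, with the convention that it is `∞` for `k = 0`. -/
def expo (k : ℝ) : ℝ≥0∞ := if k = 0 then ⊤ else ENNReal.ofReal (1 + 1 / k)

/-! ### The Newtonian kernel -/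

/-- The Newtonian kernel `|z|⁻¹`, with value `0` at the origin (a null set). -/
def newtonKer (z : V3) : ℝ≥0∞ := ENNReal.ofReal (‖z‖⁻¹)

lemma measurable_newtonKer : Measurable newtonKer := by
  unfold newtonKer; fun_prop

lemma newtonKer_neg (z : V3) : newtonKer (-z) = newtonKer z := by simp [newtonKer]

/-- The Newtonian kernel truncated to the ball `|z| < R`. -/
def nearKer (R : ℝ) (z : V3) : ℝ≥0∞ := if ‖z‖ < R then newtonKer z else 0

/-- The Newtonian kernel truncated to the exterior `|z| ≥ R`. -/
def farKer (R : ℝ) (z : V3) : ℝ≥0∞ := if ‖z‖ < R then 0 else newtonKer z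

lemma measurable_nearKer (R : ℝ) : Measurable (nearKer R) :=
  Measurable.ite (measurableSet_lt measurable_norm measurable_const) measurable_newtonKer
    measurable_const

lemma measurable_farKer (R : ℝ) : Measurable (farKer R) :=
  Measurable.ite (measurableSet_lt measurable_norm measurable_const) measurable_const
    measurable_newtonKer

lemma newtonKer_smul {R : ℝ} (hR : 0 < R) (z : V3) :
    newtonKer (R • z) = ENNReal.ofReal R ^ (-1 : ℝ) * newtonKer z := by
  unfold newtonKer
  rw [norm_smul, Real.norm_of_nonneg hR.le, mul_inv, ENNReal.ofReal_mul (by positivity),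
    ENNReal.rpow_neg_one, ENNReal.ofReal_inv_of_pos hR]

lemma nearKer_smul {R : ℝ} (hR : 0 < R) (z : V3) :
    nearKer R (R • z) = ENNReal.ofReal R ^ (-1 : ℝ) * nearKer 1 z := by
  unfold nearKer
  rw [newtonKer_smul hR, norm_smul, Real.norm_of_nonneg hR.le, mul_ite, mul_zero]
  congr 1
  simp [mul_lt_iff_lt_one_right hR]

lemma farKer_smul {R : ℝ} (hR : 0 < R) (z : V3) :
    farKer R (R • z) = ENNReal.ofReal R ^ (-1 : ℝ) * farKer 1 z := by
  unfold farKer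
  rw [newtonKer_smul hR, norm_smul, Real.norm_of_nonneg hR.le, mul_ite, mul_zero]
  congr 1
  simp [mul_lt_iff_lt_one_right hR]

lemma lintegral_eq_dilation {g : V3 → ℝ≥0∞} (hg : Measurable g) {R : ℝ} (hR : 0 < R) :
    ∫⁻ z, g z = ENNReal.ofReal R ^ (3 : ℝ) * ∫⁻ z, g (R • z) := by
  have h := Measure.map_addHaar_smul (volume : Measure V3) hR.ne'
  have h2 : ∫⁻ z, g (R • z) = ∫⁻ z, g z ∂(Measure.map (R • ·) (volume : Measure V3)) :=
    (lintegral_map hg (by fun_prop)).symm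
  have hR0 : ENNReal.ofReal R ≠ 0 := by simpa using hR
  rw [h2, h, lintegral_smul_measure, finrank_euclideanSpace, Fintype.card_fin,
    abs_of_pos (by positivity), ENNReal.ofReal_inv_of_pos (by positivity),
    ENNReal.ofReal_pow hR.le, smul_eq_mul, ← mul_assoc]
  have : ENNReal.ofReal R ^ (3 : ℝ) = ENNReal.ofReal R ^ 3 := by
    rw [← ENNReal.rpow_natCast]; norm_num
  rw [this, ENNReal.mul_inv_cancel (pow_ne_zero _ hR0) (by simp), one_mul]

/-- The integral of `|z|⁻¹` over the unit ball. -/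
def nearConst : ℝ≥0∞ := ∫⁻ z, nearKer 1 z

/-- The integral of `|z|⁻⁶` over the exterior of the unit ball. -/
def farConst : ℝ≥0∞ := ∫⁻ z, farKer 1 z ^ (6 : ℝ)

lemma lintegral_nearKer {R : ℝ} (hR : 0 < R) :
    ∫⁻ z, nearKer R z = ENNReal.ofReal R ^ (2 : ℝ) * nearConst := by
  have hR0 : ENNReal.ofReal R ≠ 0 := by simpa using hR
  rw [lintegral_eq_dilation (measurable_nearKer R) hR]
  simp_rw [nearKer_smul hR]
  rw [lintegral_const_mul _ (measurable_nearKer 1), ← mul_assoc,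
    ← ENNReal.rpow_add _ _ hR0 ENNReal.ofReal_ne_top, nearConst]
  norm_num

lemma lintegral_farKer {R : ℝ} (hR : 0 < R) :
    ∫⁻ z, farKer R z ^ (6 : ℝ) = ENNReal.ofReal R ^ (-3 : ℝ) * farConst := by
  have hR0 : ENNReal.ofReal R ≠ 0 := by simpa using hR
  rw [lintegral_eq_dilation ((measurable_farKer R).pow_const _) hR]
  simp_rw [farKer_smul hR, ENNReal.mul_rpow_of_nonneg _ _ (show (0 : ℝ) ≤ 6 by norm_num),
    ← ENNReal.rpow_mul]
  rw [lintegral_const_mul _ ((measurable_farKer 1).pow_const _), ← mul_assoc,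
    ← ENNReal.rpow_add _ _ hR0 ENNReal.ofReal_ne_top, farConst]
  norm_num

lemma nearConst_ne_top : nearConst ≠ ∞ := by
  have h : IntegrableOn (fun z : V3 => ‖z‖⁻¹) (Metric.ball 0 1) := by
    refine integrableOn_ball_of_norm_le_rpow (C := 1) (α := 1) (by simp) (by simp) ?_
      (by fun_prop)
    refine Filter.Eventually.of_forall fun z => ?_
    simp [Real.rpow_neg_one]
  have h2 := h.lintegral_lt_top
  rw [← lintegral_indicator Metric.isOpen_ball.measurableSet] at h2
  refine ne_of_lt (lt_of_le_of_lt (lintegral_mono fun z => ?_) h2)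
  simp [nearKer, indicator, newtonKer]

lemma farConst_ne_top : farConst ≠ ∞ := by
  have h : Integrable (fun z : V3 => (1 + ‖z‖) ^ (-6 : ℝ)) :=
    integrable_one_add_norm (by simp; norm_num)
  have h2 := (h.const_mul 64).lintegral_lt_top
  refine ne_of_lt (lt_of_le_of_lt (lintegral_mono fun z => ?_) h2)
  unfold farKer newtonKer
  split_ifs with hz
  · simp
  · push Not at hz
    have hz0 : 0 < ‖z‖ := by linarith
    rw [ENNReal.ofReal_rpow_of_nonneg (by positivity) (by norm_num)]
    refine ENNReal.ofReal_le_ofReal ?_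
    rw [show (-6 : ℝ) = -((6 : ℕ) : ℝ) by norm_num, show (6 : ℝ) = ((6 : ℕ) : ℝ) by norm_num,
      Real.rpow_neg (by positivity), Real.rpow_natCast, Real.rpow_natCast, inv_pow,
      ← div_eq_mul_inv, inv_eq_one_div, div_le_div_iff₀ (by positivity) (by positivity)]
    calc 1 * (1 + ‖z‖) ^ 6 ≤ (2 * ‖z‖) ^ 6 := by
          rw [one_mul]; gcongr; linarith
      _ = _ := by ring

/-- Choice of the splitting radius: balances `u R ^ a` against `v R ^ (-b)`. -/
lemma exists_balance {u v : ℝ≥0∞} (hu : u ≠ 0) (hu' : u ≠ ∞) (hv : v ≠ 0) (hv' : v ≠ ∞)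
    {a b : ℝ} (ha : 0 < a) (hb : 0 < b) :
    ∃ R : ℝ, 0 < R ∧
      u * ENNReal.ofReal R ^ a = u ^ (b / (a + b)) * v ^ (a / (a + b)) ∧
      v * ENNReal.ofReal R ^ (-b) = u ^ (b / (a + b)) * v ^ (a / (a + b)) := by
  have hu2 : u⁻¹ ≠ 0 := by simpa using hu'
  have hu3 : u⁻¹ ≠ ∞ := by simpa using hu
  have hr0 : v * u⁻¹ ≠ 0 := mul_ne_zero hv hu2
  have hrt : v * u⁻¹ ≠ ∞ := ENNReal.mul_ne_top hv' hu3
  set r : ℝ≥0∞ := (v * u⁻¹) ^ (1 / (a + b)) with hr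
  have h0 : r ≠ 0 := by
    rw [hr]; simp [ENNReal.rpow_eq_zero_iff, hr0, hrt]
  have ht : r ≠ ∞ := by
    rw [hr]; simp [ENNReal.rpow_eq_top_iff, hr0, hrt]
  have key : ∀ c : ℝ, r ^ c = v ^ (c / (a + b)) * u ^ (-(c / (a + b))) := by
    intro c
    rw [hr, ← ENNReal.rpow_mul, ENNReal.mul_rpow_of_ne_top hv' hu3, ENNReal.inv_rpow,
      ← ENNReal.rpow_neg]
    ring_nf
  refine ⟨r.toReal, ENNReal.toReal_pos h0 ht, ?_, ?_⟩
  · rw [ENNReal.ofReal_toReal ht, key]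
    have : b / (a + b) = 1 + -(a / (a + b)) := by field_simp; ring
    rw [this, ENNReal.rpow_add _ _ hu hu', ENNReal.rpow_one]
    ring
  · rw [ENNReal.ofReal_toReal ht, key]
    have : a / (a + b) = 1 + (-b / (a + b)) := by field_simp; ring
    rw [this, ENNReal.rpow_add _ _ hv hv', ENNReal.rpow_one, neg_div, neg_neg]
    ring

/-! ### The diagonal Hardy–Littlewood–Sobolev inequality -/

/-- The potential at `x` of the part of `ρ` below the height `a`, split at distance `R`: nearby
`ρ` is bounded by `a`, far away Hölder's inequality with exponents `6/5` and `6` applies. -/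
lemma lintegral_sublevel_le_of_radius {ρ : V3 → ℝ≥0∞} (hρ : Measurable ρ) (a : ℝ≥0∞) (x : V3)
    {R : ℝ} (hR : 0 < R) :
    ∫⁻ y, (if ρ y ≤ a then ρ y * newtonKer (x - y) else 0)
      ≤ nearConst * (a * ENNReal.ofReal R ^ (2 : ℝ))
        + farConst ^ (1 / 6 : ℝ)
          * ((∫⁻ y, ρ y ^ (6 / 5 : ℝ)) ^ (5 / 6 : ℝ) * ENNReal.ofReal R ^ (-(1 / 2) : ℝ)) := by
  have mn : Measurable fun y => nearKer R (x - y) :=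
    (measurable_nearKer R).comp (measurable_const.sub measurable_id)
  have mf : Measurable fun y => farKer R (x - y) :=
    (measurable_farKer R).comp (measurable_const.sub measurable_id)
  have hsplit : ∫⁻ y, (if ρ y ≤ a then ρ y * newtonKer (x - y) else 0)
      ≤ ∫⁻ y, (a * nearKer R (x - y) + ρ y * farKer R (x - y)) := by
    refine lintegral_mono fun y => ?_
    dsimp only
    split_ifs with h
    · unfold nearKer farKer
      split_ifs
      · simpa using mul_le_mul_left h _
      · simp
    · simp
  have hfar : ∫⁻ y, ρ y * farKer R (x - y)
      ≤ (∫⁻ y, ρ y ^ (6 / 5 : ℝ)) ^ (5 / 6 : ℝ)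
        * (ENNReal.ofReal R ^ (-3 : ℝ) * farConst) ^ (1 / 6 : ℝ) := by
    have h := ENNReal.lintegral_mul_norm_pow_le (μ := (volume : Measure V3))
      (hρ.pow_const (6 / 5 : ℝ)).aemeasurable (mf.pow_const (6 : ℝ)).aemeasurable
      (p := 5 / 6) (q := 1 / 6) (by norm_num) (by norm_num) (by norm_num)
    simp_rw [← ENNReal.rpow_mul] at h
    norm_num only [ENNReal.rpow_one] at h
    rw [lintegral_sub_left_eq_self (fun z => farKer R z ^ (6 : ℝ)) x, lintegral_farKer hR] at h
    exact h
  calc _ ≤ _ := hsplit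
    _ = a * (ENNReal.ofReal R ^ (2 : ℝ) * nearConst) + ∫⁻ y, ρ y * farKer R (x - y) := by
      rw [lintegral_add_left (mn.const_mul a), lintegral_const_mul _ mn,
        lintegral_sub_left_eq_self (fun z => nearKer R z) x, lintegral_nearKer hR]
    _ ≤ _ := add_le_add_right hfar _
    _ = _ := by
      rw [ENNReal.mul_rpow_of_nonneg _ _ (by norm_num), ← ENNReal.rpow_mul]
      norm_num only
      ring

/-- The constant of the diagonal Hardy–Littlewood–Sobolev estimate, up to the factor `2` coming
from symmetrization. -/
def hlsConst : ℝ≥0∞ := nearConst + farConst ^ (1 / 6 : ℝ)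

lemma hlsConst_ne_top : hlsConst ≠ ∞ :=
  ENNReal.add_ne_top.2 ⟨nearConst_ne_top,
    ENNReal.rpow_ne_top_of_nonneg (by norm_num) farConst_ne_top⟩

lemma lintegral_eq_zero_of_rpow {α : Type*} [MeasurableSpace α] {μ : Measure α} {g h : α → ℝ≥0∞}
    (hg : Measurable g) {s : ℝ} (hs : 0 < s) (h0 : ∫⁻ y, g y ^ s ∂μ = 0)
    (hgh : ∀ y, g y = 0 → h y = 0) : ∫⁻ y, h y ∂μ = 0 := by
  rw [lintegral_eq_zero_iff (hg.pow_const s)] at h0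
  refine (lintegral_congr_ae ?_).trans lintegral_zero
  filter_upwards [h0] with y hy
  apply hgh
  simpa [ENNReal.rpow_eq_zero_iff, hs, hs.not_gt] using hy

/-- At each point `x`, the potential generated by the part of `ρ` lying below the height `ρ x`
is at most a constant times `‖ρ‖_{6/5}^{4/5} ρ(x)^{1/5}`. The restriction to this part is what
bounds the near-field contribution by `ρ(x) R²`. -/
lemma mul_lintegral_sublevel_le {ρ : V3 → ℝ≥0∞} (hρ : Measurable ρ) (x : V3) :
    ρ x * ∫⁻ y, (if ρ y ≤ ρ x then ρ y * newtonKer (x - y) else 0)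
      ≤ hlsConst * (∫⁻ y, ρ y ^ (6 / 5 : ℝ)) ^ (2 / 3 : ℝ) * ρ x ^ (6 / 5 : ℝ) := by
  set S := ∫⁻ y, ρ y ^ (6 / 5 : ℝ) with hS
  rcases eq_or_ne (ρ x) 0 with ha0 | ha0
  · simp [ha0]
  rcases eq_or_ne S 0 with hS0 | hS0
  · rw [lintegral_eq_zero_of_rpow hρ (s := 6 / 5) (by norm_num) hS0
      (fun y hy => by simp [hy])]
    simp
  have key : ∀ R : ℝ, 0 < R → ∫⁻ y, (if ρ y ≤ ρ x then ρ y * newtonKer (x - y) else 0)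
      ≤ nearConst * (ρ x * ENNReal.ofReal R ^ (2 : ℝ))
        + farConst ^ (1 / 6 : ℝ) * (S ^ (5 / 6 : ℝ) * ENNReal.ofReal R ^ (-(1 / 2) : ℝ)) :=
    fun R hR => lintegral_sublevel_le_of_radius hρ (ρ x) x hR
  by_cases hc : hlsConst = 0
  · -- If the constant vanished, both kernel integrals would vanish.
    have h1 : nearConst = 0 ∧ farConst ^ (1 / 6 : ℝ) = 0 := by
      simpa only [hlsConst, add_eq_zero] using hc
    have := key 1 one_pos
    rw [h1.1, h1.2, zero_mul, zero_mul, add_zero, nonpos_iff_eq_zero] at this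
    simp [this]
  rcases eq_or_ne (ρ x) ∞ with hat | hat
  · rw [hat, ENNReal.top_rpow_of_pos (by norm_num), ENNReal.mul_top]
    · exact le_top
    · refine mul_ne_zero hc ?_
      norm_num [ENNReal.rpow_eq_zero_iff, hS0]
  rcases eq_or_ne S ∞ with hSt | hSt
  · rw [hSt, ENNReal.top_rpow_of_pos (by norm_num), ENNReal.mul_top hc, ENNReal.top_mul]
    · exact le_top
    · simp [ENNReal.rpow_eq_zero_iff, ha0, hat]
  have hv0 : S ^ (5 / 6 : ℝ) ≠ 0 := by norm_num [ENNReal.rpow_eq_zero_iff, hS0]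
  have hvt : S ^ (5 / 6 : ℝ) ≠ ∞ := ENNReal.rpow_ne_top_of_nonneg (by norm_num) hSt
  obtain ⟨R, hR, e1, e2⟩ := exists_balance ha0 hat hv0 hvt (a := 2) (b := 1 / 2) (by norm_num)
    (by norm_num)
  have h := key R hR
  rw [e1, e2, ← add_mul, ← ENNReal.rpow_mul] at h
  norm_num only at h
  calc _ ≤ _ := mul_le_mul_right h _
    _ = hlsConst * S ^ (2 / 3 : ℝ) * (ρ x ^ (1 : ℝ) * ρ x ^ (1 / 5 : ℝ)) := by
      rw [ENNReal.rpow_one, hlsConst]; norm_num only; ring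
    _ = _ := by rw [← ENNReal.rpow_add _ _ ha0 hat]; norm_num only

/-- The diagonal Hardy–Littlewood–Sobolev inequality in `ℝ³` for the Newtonian kernel. -/
lemma lintegral_newton_le {ρ : V3 → ℝ≥0∞} (hρ : Measurable ρ) :
    ∫⁻ x, ∫⁻ y, ρ x * (ρ y * newtonKer (x - y))
      ≤ 2 * hlsConst * (∫⁻ y, ρ y ^ (6 / 5 : ℝ)) ^ (5 / 3 : ℝ) := by
  set S := ∫⁻ y, ρ y ^ (6 / 5 : ℝ) with hS
  -- The part of the double integral where the density at `y` is at most the one at `x`.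
  let H : V3 → V3 → ℝ≥0∞ := fun x y =>
    ρ x * (if ρ y ≤ ρ x then ρ y * newtonKer (x - y) else 0)
  have m1 : Measurable fun z : V3 × V3 => ρ z.1 := hρ.comp measurable_fst
  have m2 : Measurable fun z : V3 × V3 => ρ z.2 := hρ.comp measurable_snd
  have mH : Measurable (Function.uncurry H) :=
    m1.mul (Measurable.ite (measurableSet_le m2 m1)
      (m2.mul (measurable_newtonKer.comp (measurable_fst.sub measurable_snd))) measurable_const)
  have mH1 : ∀ x, Measurable (H x) := fun x => mH.comp measurable_prodMk_left
  have hpt : ∀ x y, ρ x * (ρ y * newtonKer (x - y)) ≤ H x y + H y x := by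
    intro x y
    rcases le_total (ρ y) (ρ x) with h | h
    · refine le_trans (le_of_eq ?_) le_self_add
      simp [H, h]
    · refine le_trans (le_of_eq ?_) le_add_self
      simp only [H, h, if_true]
      rw [← newtonKer_neg (y - x), neg_sub]
      ring
  have hone : ∫⁻ x, ∫⁻ y, H x y ≤ hlsConst * S ^ (5 / 3 : ℝ) := by
    calc ∫⁻ x, ∫⁻ y, H x y
        ≤ ∫⁻ x, hlsConst * S ^ (2 / 3 : ℝ) * ρ x ^ (6 / 5 : ℝ) := by
          refine lintegral_mono fun x => ?_
          simp only [H]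
          rw [lintegral_const_mul]
          · exact mul_lintegral_sublevel_le hρ x
          · exact Measurable.ite (measurableSet_le hρ measurable_const)
              (hρ.mul (measurable_newtonKer.comp (measurable_const.sub measurable_id)))
              measurable_const
      _ = hlsConst * (S ^ (2 / 3 : ℝ) * S ^ (1 : ℝ)) := by
          rw [lintegral_const_mul _ (hρ.pow_const _), ENNReal.rpow_one, ← hS, mul_assoc]
      _ = _ := by
          rw [← ENNReal.rpow_add_of_nonneg _ _ (by norm_num) (by norm_num)]
          norm_num only
  calc ∫⁻ x, ∫⁻ y, ρ x * (ρ y * newtonKer (x - y))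
      ≤ ∫⁻ x, ∫⁻ y, (H x y + H y x) :=
        lintegral_mono fun x => lintegral_mono fun y => hpt x y
    _ = (∫⁻ x, ∫⁻ y, H x y) + ∫⁻ x, ∫⁻ y, H y x := by
        simp_rw [lintegral_add_left (mH1 _)]
        rw [lintegral_add_left (f := fun x => ∫⁻ y, H x y) mH.lintegral_prod_right']
    _ = (∫⁻ x, ∫⁻ y, H x y) + ∫⁻ x, ∫⁻ y, H x y := by
        congr 1
        exact lintegral_lintegral_swap (f := fun x y => H y x)
          (mH.comp measurable_swap).aemeasurable
    _ ≤ _ := by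
        rw [mul_assoc, two_mul]
        exact add_le_add hone hone

/-! ### Bounding the spatial density by momentum splitting -/

/-- The relativistic energy `√(1 + |p|²)` of a particle with momentum `p`. -/
def relEnergy (p : V3) : ℝ≥0∞ := ENNReal.ofReal (Real.sqrt (1 + ‖p‖ ^ 2))

lemma measurable_relEnergy : Measurable relEnergy := by
  unfold relEnergy; fun_prop

/-- The constant in the bound of the density by its `L^{3/2}` norm and kinetic energy. -/
def densConst : ℝ≥0∞ := volume (Metric.ball (0 : V3) 1) ^ (1 / 3 : ℝ) + 1

lemma densConst_ne_top : densConst ≠ ∞ :=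
  ENNReal.add_ne_top.2 ⟨ENNReal.rpow_ne_top_of_nonneg (by norm_num) measure_ball_lt_top.ne,
    ENNReal.one_ne_top⟩

/-- Momentum splitting: small momenta are controlled by Hölder's inequality, large momenta by
the kinetic energy. -/
lemma lintegral_momentum_le_of_radius {φ : V3 → ℝ≥0∞} (hφ : Measurable φ) {P : ℝ} (hP : 0 < P) :
    ∫⁻ p, φ p ≤ volume (Metric.ball (0 : V3) 1) ^ (1 / 3 : ℝ)
        * ((∫⁻ p, φ p ^ (3 / 2 : ℝ)) ^ (2 / 3 : ℝ) * ENNReal.ofReal P ^ (1 : ℝ))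
      + (∫⁻ p, relEnergy p * φ p) * ENNReal.ofReal P ^ (-1 : ℝ) := by
  have hP0 : ENNReal.ofReal P ≠ 0 := by simpa using hP
  have mB : Measurable ((Metric.ball (0 : V3) P).indicator (1 : V3 → ℝ≥0∞)) :=
    measurable_one.indicator Metric.isOpen_ball.measurableSet
  have h := ENNReal.lintegral_mul_norm_pow_le (μ := (volume : Measure V3))
      (hφ.pow_const (3 / 2 : ℝ)).aemeasurable mB.aemeasurable
      (p := 2 / 3) (q := 1 / 3) (by norm_num) (by norm_num) (by norm_num)
  rw [lintegral_indicator_one Metric.isOpen_ball.measurableSet,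
    Measure.addHaar_ball _ _ hP.le, finrank_euclideanSpace, Fintype.card_fin,
    ENNReal.mul_rpow_of_nonneg _ _ (by norm_num), ENNReal.ofReal_pow hP.le,
    ← ENNReal.rpow_natCast, ← ENNReal.rpow_mul] at h
  norm_num only at h
  have hpt : ∀ p, φ p ≤ (φ p ^ (3 / 2 : ℝ)) ^ (2 / 3 : ℝ)
      * (Metric.ball (0 : V3) P).indicator (1 : V3 → ℝ≥0∞) p ^ (1 / 3 : ℝ)
      + relEnergy p * φ p * ENNReal.ofReal P ^ (-1 : ℝ) := by
    intro p
    by_cases hp : p ∈ Metric.ball (0 : V3) P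
    · refine le_trans (le_of_eq ?_) le_self_add
      rw [indicator_of_mem hp, ← ENNReal.rpow_mul]
      norm_num
    · refine le_trans ?_ le_add_self
      have hpP : P ≤ ‖p‖ := by simpa using hp
      have hw : ENNReal.ofReal P ≤ relEnergy p := by
        refine ENNReal.ofReal_le_ofReal (hpP.trans ?_)
        exact Real.le_sqrt_of_sq_le (by linarith)
      rw [ENNReal.rpow_neg_one]
      calc φ p = ENNReal.ofReal P * (ENNReal.ofReal P)⁻¹ * φ p := by
            rw [ENNReal.mul_inv_cancel hP0 ENNReal.ofReal_ne_top, one_mul]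
        _ ≤ relEnergy p * (ENNReal.ofReal P)⁻¹ * φ p := by gcongr
        _ = _ := by ring
  calc ∫⁻ p, φ p ≤ _ := lintegral_mono hpt
    _ = (∫⁻ p, (φ p ^ (3 / 2 : ℝ)) ^ (2 / 3 : ℝ)
      * (Metric.ball (0 : V3) P).indicator (1 : V3 → ℝ≥0∞) p ^ (1 / 3 : ℝ))
      + (∫⁻ p, relEnergy p * φ p) * ENNReal.ofReal P ^ (-1 : ℝ) := by
        have mW : Measurable fun p => relEnergy p * φ p := measurable_relEnergy.mul hφ
        rw [lintegral_add_right _ (mW.mul_const _), lintegral_mul_const _ mW]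
    _ ≤ _ := by
        refine add_le_add_left (h.trans (le_of_eq ?_)) _
        norm_num only
        ring

lemma lintegral_momentum_le {φ : V3 → ℝ≥0∞} (hφ : Measurable φ) :
    ∫⁻ p, φ p ≤ densConst * ((∫⁻ p, φ p ^ (3 / 2 : ℝ)) ^ (1 / 3 : ℝ)
      * (∫⁻ p, relEnergy p * φ p) ^ (1 / 2 : ℝ)) := by
  set G := ∫⁻ p, φ p ^ (3 / 2 : ℝ) with hG
  set e := ∫⁻ p, relEnergy p * φ p with he
  have hd : densConst ≠ 0 := by simp [densConst]
  rcases eq_or_ne G 0 with hG0 | hG0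
  · rw [lintegral_eq_zero_of_rpow (h := φ) hφ (by norm_num) hG0 fun y hy => hy]
    exact zero_le
  rcases eq_or_ne e 0 with he0 | he0
  · have : ∫⁻ p, φ p ≤ e := by
      refine lintegral_mono fun p => ?_
      have h1 : (1 : ℝ≥0∞) ≤ relEnergy p := by
        rw [relEnergy, ENNReal.one_le_ofReal, Real.one_le_sqrt]
        nlinarith [sq_nonneg ‖p‖]
      simpa using mul_le_mul_left h1 (φ p)
    exact (this.trans he0.le).trans zero_le
  rcases eq_or_ne G ∞ with hGt | hGt
  · rw [hGt, ENNReal.top_rpow_of_pos (by norm_num), ENNReal.top_mul, ENNReal.mul_top hd]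
    · exact le_top
    · simp [ENNReal.rpow_eq_zero_iff, he0]
  rcases eq_or_ne e ∞ with het | het
  · rw [het, ENNReal.top_rpow_of_pos (by norm_num), ENNReal.mul_top, ENNReal.mul_top hd]
    · exact le_top
    · simp [ENNReal.rpow_eq_zero_iff, hG0]
  have hv0 : G ^ (2 / 3 : ℝ) ≠ 0 := by norm_num [ENNReal.rpow_eq_zero_iff, hG0]
  have hvt : G ^ (2 / 3 : ℝ) ≠ ∞ := ENNReal.rpow_ne_top_of_nonneg (by norm_num) hGt
  obtain ⟨P, hP, e1, e2⟩ := exists_balance hv0 hvt he0 het one_pos one_pos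
  have h := lintegral_momentum_le_of_radius hφ hP
  rw [← hG, ← he, e1, e2, ← ENNReal.rpow_mul] at h
  norm_num only at h
  refine h.trans (le_of_eq ?_)
  rw [densConst]
  norm_num only
  ring

/-- The `L^{6/5}` norm of the density is controlled by the `L^{3/2}` norm of the phase-space
density and the kinetic energy. -/
lemma lintegral_density_rpow_le {F : V3 × V3 → ℝ≥0∞} (hF : Measurable F) :
    (∫⁻ x, (∫⁻ p, F (x, p)) ^ (6 / 5 : ℝ)) ^ (5 / 3 : ℝ)
      ≤ densConst ^ (2 : ℝ) * ((∫⁻ z, F z ^ (3 / 2 : ℝ)) ^ (2 / 3 : ℝ)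
        * ∫⁻ z, relEnergy z.2 * F z) := by
  have mG : Measurable fun z : V3 × V3 => F z ^ (3 / 2 : ℝ) := hF.pow_const _
  have mE : Measurable fun z : V3 × V3 => relEnergy z.2 * F z :=
    (measurable_relEnergy.comp measurable_snd).mul hF
  let G : V3 → ℝ≥0∞ := fun x => ∫⁻ p, F (x, p) ^ (3 / 2 : ℝ)
  let e : V3 → ℝ≥0∞ := fun x => ∫⁻ p, relEnergy p * F (x, p)
  have mG' : Measurable G := mG.lintegral_prod_right'
  have mE' : Measurable e := mE.lintegral_prod_right'
  have hpt : ∀ x, (∫⁻ p, F (x, p)) ^ (6 / 5 : ℝ)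
      ≤ densConst ^ (6 / 5 : ℝ) * (G x ^ (2 / 5 : ℝ) * e x ^ (3 / 5 : ℝ)) := by
    intro x
    have h := lintegral_momentum_le (hF.comp (measurable_prodMk_left (x := x)))
    have h2 := ENNReal.rpow_le_rpow h (show (0 : ℝ) ≤ 6 / 5 by norm_num)
    rw [ENNReal.mul_rpow_of_nonneg _ _ (by norm_num), ENNReal.mul_rpow_of_nonneg _ _ (by norm_num),
      ← ENNReal.rpow_mul, ← ENNReal.rpow_mul] at h2
    norm_num only at h2
    exact h2
  have hS : ∫⁻ x, (∫⁻ p, F (x, p)) ^ (6 / 5 : ℝ)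
      ≤ densConst ^ (6 / 5 : ℝ) * ((∫⁻ z, F z ^ (3 / 2 : ℝ)) ^ (2 / 5 : ℝ)
        * (∫⁻ z, relEnergy z.2 * F z) ^ (3 / 5 : ℝ)) := by
    rw [Measure.volume_eq_prod, lintegral_prod _ mG.aemeasurable, lintegral_prod _ mE.aemeasurable]
    refine (lintegral_mono hpt).trans ?_
    have mGE : Measurable fun x => G x ^ (2 / 5 : ℝ) * e x ^ (3 / 5 : ℝ) :=
      (mG'.pow_const _).mul (mE'.pow_const _)
    rw [lintegral_const_mul _ mGE]
    gcongr
    exact ENNReal.lintegral_mul_norm_pow_le mG'.aemeasurable mE'.aemeasurable (by norm_num)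
      (by norm_num) (by norm_num)
  have h3 := ENNReal.rpow_le_rpow hS (show (0 : ℝ) ≤ 5 / 3 by norm_num)
  rw [ENNReal.mul_rpow_of_nonneg _ _ (by norm_num), ENNReal.mul_rpow_of_nonneg _ _ (by norm_num),
    ← ENNReal.rpow_mul, ← ENNReal.rpow_mul, ← ENNReal.rpow_mul] at h3
  norm_num only [ENNReal.rpow_one] at h3
  exact h3

/-! ### Interpolation in phase space and conclusion -/

/-- Interpolation of `L^{3/2}` between `L¹` and `L^{1+1/k}`. -/
lemma interpolation {k : ℝ} (hk : 0 ≤ k) (hk' : k ≤ 2) {f : V3 × V3 → ℝ} (hf : Measurable f) :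
    (∫⁻ z, ‖f z‖ₑ ^ (3 / 2 : ℝ)) ^ (2 / 3 : ℝ)
      ≤ eLpNorm f 1 volume ^ ((2 - k) / 3) * eLpNorm f (expo k) volume ^ ((k + 1) / 3) := by
  rw [eLpNorm_one_eq_lintegral_enorm]
  rcases hk.eq_or_lt with rfl | hk0
  · simp only [expo, if_true, eLpNorm_exponent_top]
    have h : ∫⁻ z, ‖f z‖ₑ ^ (3 / 2 : ℝ)
        ≤ ∫⁻ z, ‖f z‖ₑ * eLpNormEssSup f volume ^ (1 / 2 : ℝ) := by
      refine lintegral_mono_ae ?_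
      filter_upwards [ae_le_eLpNormEssSup (f := f) (μ := volume)] with z hz
      rw [show (3 / 2 : ℝ) = 1 + 1 / 2 by norm_num,
        ENNReal.rpow_add_of_nonneg _ _ (by norm_num) (by norm_num), ENNReal.rpow_one]
      gcongr
    rw [lintegral_mul_const _ hf.enorm] at h
    refine (ENNReal.rpow_le_rpow h (by norm_num)).trans (le_of_eq ?_)
    rw [ENNReal.mul_rpow_of_nonneg _ _ (by norm_num), ← ENNReal.rpow_mul]
    norm_num
  · have hq : (0 : ℝ) < 1 + 1 / k := by positivity
    have he : expo k = ENNReal.ofReal (1 + 1 / k) := by simp [expo, hk0.ne']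
    rw [he, eLpNorm_eq_lintegral_rpow_enorm_toReal (by simpa using hq) ENNReal.ofReal_ne_top,
      ENNReal.toReal_ofReal hq.le]
    have h := ENNReal.lintegral_mul_norm_pow_le (μ := (volume : Measure (V3 × V3)))
      hf.enorm.aemeasurable (hf.enorm.pow_const (1 + 1 / k)).aemeasurable
      (p := (2 - k) / 2) (q := k / 2) (by linarith) (by linarith) (by ring)
    have hexp : ∀ z, ‖f z‖ₑ ^ ((2 - k) / 2) * (‖f z‖ₑ ^ (1 + 1 / k)) ^ (k / 2)
        = ‖f z‖ₑ ^ (3 / 2 : ℝ) := by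
      intro z
      rw [← ENNReal.rpow_mul, ← ENNReal.rpow_add_of_nonneg _ _ (by linarith) (by positivity)]
      congr 1
      field_simp
      ring
    simp_rw [hexp] at h
    refine (ENNReal.rpow_le_rpow h (by norm_num)).trans (le_of_eq ?_)
    rw [ENNReal.mul_rpow_of_nonneg _ _ (by norm_num), ← ENNReal.rpow_mul, ← ENNReal.rpow_mul,
      ← ENNReal.rpow_mul]
    congr 2
    · ring
    · field_simp

/-- When `f (x, ·)` is not integrable the left side is `0`, so only an inequality holds. -/
lemma ofReal_spatialDensity_le {f : V3 × V3 → ℝ} (hf : Measurable f) (h0 : ∀ z, 0 ≤ f z)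
    (x : V3) : ENNReal.ofReal (spatialDensity f x) ≤ ∫⁻ p, ‖f (x, p)‖ₑ := by
  unfold spatialDensity
  rw [integral_eq_lintegral_of_nonneg_ae (Eventually.of_forall fun p => h0 (x, p))
    (hf.comp measurable_prodMk_left).aestronglyMeasurable]
  refine ENNReal.ofReal_toReal_le.trans (lintegral_mono fun p => ?_)
  rw [Real.enorm_of_nonneg (h0 _)]

/-- **Key potential-energy estimate for (RVP).**  For `0 ≤ k ≤ 2` there is `C > 0`
depending only on `k` such that for every nonnegative measurable phase-space density `f`,
`(1/2) ∬ ρ_f(x) ρ_f(y) |x−y|⁻¹ dx dy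
  ≤ C ‖f‖₁^{(2−k)/3} ‖f‖_{1+1/k}^{(k+1)/3} E_kin^{rel}(f)`,
where `E_kin^{rel}(f) = ∬ √(1+|p|²) f dp dx` is the relativistic kinetic energy. -/
theorem stmt_2 (k : ℝ) (hk : 0 ≤ k) (hk' : k ≤ 2) :
    ∃ C : ℝ, 0 < C ∧
      ∀ f : V3 × V3 → ℝ, Measurable f → (∀ z, 0 ≤ f z) →
        (1 / 2 : ℝ≥0∞) * ∫⁻ x : V3, ∫⁻ y : V3,
            ENNReal.ofReal (spatialDensity f x * spatialDensity f y / ‖x - y‖)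
          ≤ ENNReal.ofReal C
            * eLpNorm f 1 volume ^ ((2 - k) / 3)
            * eLpNorm f (expo k) volume ^ ((k + 1) / 3)
            * ∫⁻ z : V3 × V3, ENNReal.ofReal (Real.sqrt (1 + ‖z.2‖ ^ 2) * f z) := by
  set A : ℝ≥0∞ := 1 / 2 * (2 * hlsConst) * densConst ^ (2 : ℝ) with hA
  have hAt : A ≠ ∞ := by
    refine ENNReal.mul_ne_top (ENNReal.mul_ne_top (by simp) (ENNReal.mul_ne_top (by simp)
      hlsConst_ne_top)) (ENNReal.rpow_ne_top_of_nonneg (by norm_num) densConst_ne_top)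
  refine ⟨A.toReal + 1, by positivity, fun f hf h0 => ?_⟩
  let ρ : V3 → ℝ≥0∞ := fun x => ∫⁻ p, ‖f (x, p)‖ₑ
  have hρ : Measurable ρ := hf.enorm.lintegral_prod_right'
  have hsd : ∀ x, 0 ≤ spatialDensity f x := fun x => integral_nonneg fun p => h0 (x, p)
  have hpot : ∫⁻ x : V3, ∫⁻ y : V3,
      ENNReal.ofReal (spatialDensity f x * spatialDensity f y / ‖x - y‖)
      ≤ ∫⁻ x, ∫⁻ y, ρ x * (ρ y * newtonKer (x - y)) := by
    refine lintegral_mono fun x => lintegral_mono fun y => ?_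
    rw [div_eq_mul_inv, mul_assoc, ENNReal.ofReal_mul (hsd x), ENNReal.ofReal_mul (hsd y)]
    exact mul_le_mul' (ofReal_spatialDensity_le hf h0 x)
      (mul_le_mul' (ofReal_spatialDensity_le hf h0 y) le_rfl)
  have hkin : ∫⁻ z : V3 × V3, relEnergy z.2 * ‖f z‖ₑ
      = ∫⁻ z : V3 × V3, ENNReal.ofReal (Real.sqrt (1 + ‖z.2‖ ^ 2) * f z) := by
    refine lintegral_congr fun z => ?_
    rw [ENNReal.ofReal_mul (Real.sqrt_nonneg _), Real.enorm_of_nonneg (h0 z), relEnergy]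
  have hAC : A ≤ ENNReal.ofReal (A.toReal + 1) :=
    (ENNReal.ofReal_toReal hAt).symm.le.trans (ENNReal.ofReal_le_ofReal (by linarith))
  have hdens := lintegral_density_rpow_le hf.enorm
  rw [hkin] at hdens
  set E := ∫⁻ z : V3 × V3, ENNReal.ofReal (Real.sqrt (1 + ‖z.2‖ ^ 2) * f z)
  calc _ ≤ 1 / 2 * (2 * hlsConst * (∫⁻ x, ρ x ^ (6 / 5 : ℝ)) ^ (5 / 3 : ℝ)) :=
        mul_le_mul_right (hpot.trans (lintegral_newton_le hρ)) _
    _ ≤ 1 / 2 * (2 * hlsConst * (densConst ^ (2 : ℝ)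
        * ((∫⁻ z, ‖f z‖ₑ ^ (3 / 2 : ℝ)) ^ (2 / 3 : ℝ) * E))) := by gcongr
    _ = A * (∫⁻ z, ‖f z‖ₑ ^ (3 / 2 : ℝ)) ^ (2 / 3 : ℝ) * E := by rw [hA]; ring
    _ ≤ ENNReal.ofReal (A.toReal + 1) * (eLpNorm f 1 volume ^ ((2 - k) / 3)
        * eLpNorm f (expo k) volume ^ ((k + 1) / 3)) * E := by
        gcongr
        exact interpolation hk hk' hf
    _ = _ := by ring
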